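/- arXiv:0709.4587 — 2 statements merged into one kernel-verified Lean document; each statement's English description precedes it below -/
import Mathlib

section
/- Let a, b, c ∈ ℂ, let U ⊆ ℂ be open with 0, 1 ∉ U, and let u : U → ℂ be a twice differentiable solution of the Fuchsian equation u''(z) = ((a+b)/z² + (c+b)/(z−1)² − 2b/(z(z−1))) u(z) on U. Let Ω ⊆ ℂ be open and z : Ω → ℂ differentiable with z(Ω) ⊆ U, u(z(t)) ≠ 0 for all t ∈ Ω, and z'(t) = u(z(t))² for all t ∈ Ω. Define x₁(t) = u'(z(t)) · u(z(t)), x₂(t) = x₁(t) − z'(t)/z(t), x₃(t) = x₁(t) − z'(t)/(z(t)−1) (these are d/dt of log u(z(t)), log(u(z(t))/z(t)), log(u(z(t))/(z(t)−1)) respectively). Then (x₁, x₂, x₃) satisfies Halphen's second system with parameters a, b, c on Ω. -/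
/-!
As functions of `t`, the three functions `ψ = 1 / u(z)`, `z ψ` and `(z - 1) ψ` solve one linear
equation `ψ'' = -Q ψ`, where `Q = q(z) z'²` and `q` is the potential of the Fuchsian equation:
`z` is a ratio of two solutions because `z' = 1 / ψ²`. Since `xⱼ = -ψⱼ' / ψⱼ`, all three `xⱼ`
satisfy the same Riccati equation `x' = x² + Q`. Finally `x₁ - x₂ = z' / z` and
`x₁ - x₃ = z' / (z - 1)`, and rewriting `Q` in terms of these differences gives the quadratic form
of Halphen's system.
-/

/-- The quadratic form `a(x₁-x₂)² + b(x₂-x₃)² + c(x₃-x₁)²` common to the three equations of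
Halphen's second system. -/
def halphenForm {R : Type*} [CommRing R] (a b c x₁ x₂ x₃ : R) : R :=
  a * (x₁ - x₂) ^ 2 + b * (x₂ - x₃) ^ 2 + c * (x₃ - x₁) ^ 2

theorem halphenForm_sub_sub {R : Type*} [CommRing R] (a b c x r s : R) :
    halphenForm a b c x (x - r) (x - s) = (a + b) * r ^ 2 + (c + b) * s ^ 2 - 2 * b * (r * s) := by
  unfold halphenForm
  ring

section

open Filter Topology

variable {𝕜 : Type*} [NontriviallyNormedField 𝕜]

/-- Halphen's second system at the point `t`. It is phrased with `HasDerivAt`, so that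
differentiability of the three functions is part of the claim. -/
def HalphenSecondAt (a b c : 𝕜) (x₁ x₂ x₃ : 𝕜 → 𝕜) (t : 𝕜) : Prop :=
  HasDerivAt x₁ (x₁ t ^ 2 + halphenForm a b c (x₁ t) (x₂ t) (x₃ t)) t ∧
  HasDerivAt x₂ (x₂ t ^ 2 + halphenForm a b c (x₁ t) (x₂ t) (x₃ t)) t ∧
  HasDerivAt x₃ (x₃ t ^ 2 + halphenForm a b c (x₁ t) (x₂ t) (x₃ t)) t

/-- If `y = -ψ' / ψ`, the hypothesis `d'' = 2 y d'` says that `d' ψ²` is constant, so that `d ψ` is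
a second solution of the linear equation behind the Riccati equation. -/
theorem hasDerivAt_riccati_sub_div {y d d' : 𝕜 → 𝕜} {Q t : 𝕜}
    (hy : HasDerivAt y (y t ^ 2 + Q) t) (hd : HasDerivAt d (d' t) t)
    (hd' : HasDerivAt d' (2 * y t * d' t) t) (hdt : d t ≠ 0) :
    HasDerivAt (fun s ↦ y s - d' s / d s) ((y t - d' t / d t) ^ 2 + Q) t := by
  refine (hy.sub (hd'.div hd hdt)).congr_deriv ?_
  field_simp
  ring

theorem halphenSecondAt_of_riccati {a b c t : 𝕜} {x z z' : 𝕜 → 𝕜}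
    (hz : HasDerivAt z (z' t) t) (hz' : HasDerivAt z' (2 * x t * z' t) t)
    (hz0 : z t ≠ 0) (hz1 : z t ≠ 1)
    (hx : HasDerivAt x (x t ^ 2 + ((a + b) / z t ^ 2 + (c + b) / (z t - 1) ^ 2 -
      2 * b / (z t * (z t - 1))) * z' t ^ 2) t) :
    HalphenSecondAt a b c x (fun s ↦ x s - z' s / z s) (fun s ↦ x s - z' s / (z s - 1)) t := by
  have hz1' : z t - 1 ≠ 0 := sub_ne_zero.mpr hz1
  have potential_eq : ((a + b) / z t ^ 2 + (c + b) / (z t - 1) ^ 2 -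
      2 * b / (z t * (z t - 1))) * z' t ^ 2 =
      halphenForm a b c (x t) (x t - z' t / z t) (x t - z' t / (z t - 1)) := by
    rw [halphenForm_sub_sub]
    field_simp
  rw [potential_eq] at hx
  exact ⟨hx, hasDerivAt_riccati_sub_div hx hz hz' hz0,
    hasDerivAt_riccati_sub_div hx (hz.sub_const 1) hz' hz1'⟩

theorem HalphenSecondAt.congr_of_eventuallyEq {a b c t : 𝕜} {x₁ x₂ x₃ y₁ y₂ y₃ : 𝕜 → 𝕜}
    (hx : HalphenSecondAt a b c x₁ x₂ x₃ t)
    (h₁ : y₁ =ᶠ[𝓝 t] x₁) (h₂ : y₂ =ᶠ[𝓝 t] x₂) (h₃ : y₃ =ᶠ[𝓝 t] x₃) :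
    HalphenSecondAt a b c y₁ y₂ y₃ t := by
  unfold HalphenSecondAt
  rw [h₁.hasDerivAt_iff, h₂.hasDerivAt_iff, h₃.hasDerivAt_iff, h₁.eq_of_nhds, h₂.eq_of_nhds,
    h₃.eq_of_nhds]
  exact hx

theorem HalphenSecondAt.deriv_eq {a b c t : 𝕜} {x₁ x₂ x₃ : 𝕜 → 𝕜}
    (hx : HalphenSecondAt a b c x₁ x₂ x₃ t) :
    deriv x₁ t = x₁ t ^ 2 + a * (x₁ t - x₂ t) ^ 2 + b * (x₂ t - x₃ t) ^ 2 +
      c * (x₃ t - x₁ t) ^ 2 ∧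
    deriv x₂ t = x₂ t ^ 2 + a * (x₁ t - x₂ t) ^ 2 + b * (x₂ t - x₃ t) ^ 2 +
      c * (x₃ t - x₁ t) ^ 2 ∧
    deriv x₃ t = x₃ t ^ 2 + a * (x₁ t - x₂ t) ^ 2 + b * (x₂ t - x₃ t) ^ 2 +
      c * (x₃ t - x₁ t) ^ 2 := by
  simpa only [halphenForm, ← add_assoc] using
    And.intro hx.1.deriv (And.intro hx.2.1.deriv hx.2.2.deriv)

theorem hasDerivAt_comp_sq_of_deriv_eq_sq {u z : 𝕜 → 𝕜} {v t : 𝕜}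
    (hu : HasDerivAt u v (z t)) (hz : HasDerivAt z (u (z t) ^ 2) t) :
    HasDerivAt (fun s ↦ u (z s) ^ 2) (2 * (v * u (z t)) * u (z t) ^ 2) t := by
  refine ((hu.comp t hz).fun_pow 2).congr_deriv ?_
  simp only [Function.comp_apply]
  ring

theorem hasDerivAt_comp_mul_comp_of_deriv_eq_sq {u v z : 𝕜 → 𝕜} {q t : 𝕜}
    (hu : HasDerivAt u (v (z t)) (z t)) (hv : HasDerivAt v (q * u (z t)) (z t))
    (hz : HasDerivAt z (u (z t) ^ 2) t) :
    HasDerivAt (fun s ↦ v (z s) * u (z s))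
      ((v (z t) * u (z t)) ^ 2 + q * (u (z t) ^ 2) ^ 2) t := by
  refine ((hv.comp t hz).mul (hu.comp t hz)).congr_deriv ?_
  simp only [Function.comp_apply]
  ring

theorem fuchsian_solves_halphen_second_general
    {a b c : 𝕜} {U : Set 𝕜} (h0 : (0 : 𝕜) ∉ U) (h1 : (1 : 𝕜) ∉ U) {u : 𝕜 → 𝕜}
    (hu : ∀ z ∈ U, DifferentiableAt 𝕜 u z)
    (hu' : ∀ z ∈ U, DifferentiableAt 𝕜 (deriv u) z)
    (hfuchs : ∀ z ∈ U, deriv (deriv u) z =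
      ((a + b) / z ^ 2 + (c + b) / (z - 1) ^ 2 - 2 * b / (z * (z - 1))) * u z)
    {Ω : Set 𝕜} (hΩ : IsOpen Ω) {z : 𝕜 → 𝕜}
    (hz : ∀ t ∈ Ω, DifferentiableAt 𝕜 z t)
    (hrange : ∀ t ∈ Ω, z t ∈ U)
    (hwron : ∀ t ∈ Ω, deriv z t = u (z t) ^ 2)
    {x₁ x₂ x₃ : 𝕜 → 𝕜}
    (hx₁ : ∀ t ∈ Ω, x₁ t = deriv u (z t) * u (z t))
    (hx₂ : ∀ t ∈ Ω, x₂ t = x₁ t - deriv z t / z t)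
    (hx₃ : ∀ t ∈ Ω, x₃ t = x₁ t - deriv z t / (z t - 1)) :
    ∀ t ∈ Ω, HalphenSecondAt a b c x₁ x₂ x₃ t := by
  intro t ht
  have hzU : z t ∈ U := hrange t ht
  have hΩt : Ω ∈ 𝓝 t := hΩ.mem_nhds ht
  have du : HasDerivAt u (deriv u (z t)) (z t) := (hu _ hzU).hasDerivAt
  have du' : HasDerivAt (deriv u) (_ * u (z t)) (z t) :=
    hfuchs _ hzU ▸ (hu' _ hzU).hasDerivAt
  have dz : HasDerivAt z (u (z t) ^ 2) t := hwron t ht ▸ (hz t ht).hasDerivAt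
  have z_second_deriv : HasDerivAt (deriv z) (2 * x₁ t * deriv z t) t := by
    rw [hx₁ t ht, hwron t ht]
    exact (hasDerivAt_comp_sq_of_deriv_eq_sq du dz).congr_of_eventuallyEq
      (eventually_of_mem hΩt hwron)
  have riccati : HasDerivAt x₁ (x₁ t ^ 2 + ((a + b) / z t ^ 2 + (c + b) / (z t - 1) ^ 2 -
      2 * b / (z t * (z t - 1))) * deriv z t ^ 2) t := by
    rw [hx₁ t ht, hwron t ht]
    exact (hasDerivAt_comp_mul_comp_of_deriv_eq_sq du du' dz).congr_of_eventuallyEq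
      (eventually_of_mem hΩt hx₁)
  have hz0 : z t ≠ 0 := ne_of_mem_of_not_mem hzU h0
  have hz1 : z t ≠ 1 := ne_of_mem_of_not_mem hzU h1
  exact (halphenSecondAt_of_riccati (hz t ht).hasDerivAt z_second_deriv hz0 hz1
    riccati).congr_of_eventuallyEq .rfl (eventually_of_mem hΩt hx₂) (eventually_of_mem hΩt hx₃)

end

/-- **Hypergeometric (Fuchsian) solution of Halphen's second system.**
Let `u` solve the Fuchsian equation `u'' = ((a+b)/z² + (c+b)/(z−1)² − 2b/(z(z−1))) u` on an
open set `U` avoiding `0` and `1`, and let `z : Ω → U` be differentiable with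
`u(z(t)) ≠ 0` and `z'(t) = u(z(t))²`. Then `x₁ = u'(z)u(z)`, `x₂ = x₁ − z'/z`,
`x₃ = x₁ − z'/(z−1)` satisfy Halphen's second system with parameters `a, b, c` on `Ω`. -/
theorem fuchsian_solves_halphen_second
    (a b c : ℂ) (U : Set ℂ) (hU : IsOpen U) (h0 : (0 : ℂ) ∉ U) (h1 : (1 : ℂ) ∉ U)
    (u : ℂ → ℂ)
    (hu : ∀ z ∈ U, DifferentiableAt ℂ u z)
    (hu' : ∀ z ∈ U, DifferentiableAt ℂ (deriv u) z)
    (hfuchs : ∀ z ∈ U, deriv (deriv u) z =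
      ((a + b) / z ^ 2 + (c + b) / (z - 1) ^ 2 - 2 * b / (z * (z - 1))) * u z)
    (Ω : Set ℂ) (hΩ : IsOpen Ω) (z : ℂ → ℂ)
    (hz : ∀ t ∈ Ω, DifferentiableAt ℂ z t)
    (hrange : ∀ t ∈ Ω, z t ∈ U)
    (hne : ∀ t ∈ Ω, u (z t) ≠ 0)
    (hwron : ∀ t ∈ Ω, deriv z t = u (z t) ^ 2)
    (x₁ x₂ x₃ : ℂ → ℂ)
    (hx₁ : ∀ t, x₁ t = deriv u (z t) * u (z t))
    (hx₂ : ∀ t, x₂ t = x₁ t - deriv z t / z t)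
    (hx₃ : ∀ t, x₃ t = x₁ t - deriv z t / (z t - 1)) :
    ∀ t ∈ Ω,
      deriv x₁ t = x₁ t ^ 2 + a * (x₁ t - x₂ t) ^ 2 + b * (x₂ t - x₃ t) ^ 2 +
        c * (x₃ t - x₁ t) ^ 2 ∧
      deriv x₂ t = x₂ t ^ 2 + a * (x₁ t - x₂ t) ^ 2 + b * (x₂ t - x₃ t) ^ 2 +
        c * (x₃ t - x₁ t) ^ 2 ∧
      deriv x₃ t = x₃ t ^ 2 + a * (x₁ t - x₂ t) ^ 2 + b * (x₂ t - x₃ t) ^ 2 +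
        c * (x₃ t - x₁ t) ^ 2 :=
  fun t ht ↦ (fuchsian_solves_halphen_second_general h0 h1 hu hu' hfuchs hΩ hz hrange hwron
    (fun s _ ↦ hx₁ s) (fun s _ ↦ hx₂ s) (fun s _ ↦ hx₃ s) t ht).deriv_eq
end

section
/- Let Ω ⊆ ℂ be open, a, b, c ∈ ℂ, and let x₁, x₂, x₃ : Ω → ℂ be differentiable functions satisfying Halphen's second system xⱼ' = Q(xⱼ, t) where Q(x, t) := x² + a(x₁(t)−x₂(t))² + b(x₂(t)−x₃(t))² + c(x₃(t)−x₁(t))². Let c₁, c₂, c₃ ∈ ℂ with c₁ + c₂ + c₃ = 0. Then for every t ∈ Ω and every x ∈ ℂ with x ≠ x₁(t), x₂(t), x₃(t), the compatibility identity Σⱼ cⱼ xⱼ'(t)/(x − xⱼ(t))² = Q(x, t) · Σⱼ cⱼ/(x − xⱼ(t))² − 2x · Σⱼ cⱼ/(x − xⱼ(t)) holds. Equivalently, for any traceless constant 2×2 matrix S, with A(x,t) = Σⱼ (cⱼ/(x − xⱼ(t))) S and B(x,t) = Σⱼ cⱼ xⱼ(t) S − Q(x,t) A(x,t), one has ∂ₜA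 = ∂ₓB + [B, A] off the poles. -/
/-!
Since `A` and `B` are scalar multiples of the same matrix `S`, the commutator `[B, A]` vanishes and
the compatibility condition is a conservation law for the scalar factor `α = ∑ᵢ rᵢ / (x - yᵢ)`.
When `Q` has degree at most two, its Taylor expansion at `x` is
`Q(y) = Q(x) - Q'(x) (x - y) + q₂ (x - y)²`. Dividing by `(x - y)²` and summing over the poles,
the last term contributes only `q₂ ∑ᵢ rᵢ`, so poles moving by the Riccati equation `yᵢ' = Q(yᵢ)`
give `∂ₜ α + ∂ₓ (Q α) = q₂ ∑ᵢ rᵢ`, and the right-hand side vanishes when the residues sum to zero.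
-/

open Polynomial

section PoleSum

variable {ι K : Type*} [Fintype ι] [Field K]

/-- The rational function `∑ᵢ rᵢ / (x - yᵢ)` with simple poles `yᵢ` and residues `rᵢ`: the scalar
factor of the Lax matrix `A`. A term takes the value `0` at its own pole. -/
def poleSum (r y : ι → K) (x : K) : K :=
  ∑ i, r i / (x - y i)

theorem eval_eq_eval_sub_add_of_natDegree_le_two {R : Type*} [CommRing R] {Q : R[X]}
    (hQ : Q.natDegree ≤ 2) (x y : R) :
    Q.eval y = Q.eval x - Q.derivative.eval x * (x - y) + Q.coeff 2 * (x - y) ^ 2 := by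
  rw [as_sum_range_C_mul_X_pow' Q (Nat.lt_succ_of_le hQ)]
  simp [Finset.sum_range_succ]
  ring

theorem mul_eval_div_sub_sq {Q : K[X]} (hQ : Q.natDegree ≤ 2) (r : K) {x y : K} (hxy : x ≠ y) :
    r * Q.eval y / (x - y) ^ 2 =
      Q.eval x * (r / (x - y) ^ 2) - Q.derivative.eval x * (r / (x - y)) + Q.coeff 2 * r := by
  have hsub : x - y ≠ 0 := sub_ne_zero.mpr hxy
  rw [eval_eq_eval_sub_add_of_natDegree_le_two hQ x y]
  field_simp

theorem sum_mul_eval_div_sub_sq {Q : K[X]} (hQ : Q.natDegree ≤ 2) (r : ι → K) {y : ι → K} {x : K}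
    (hx : ∀ i, x ≠ y i) :
    ∑ i, r i * Q.eval (y i) / (x - y i) ^ 2 =
      Q.eval x * ∑ i, r i / (x - y i) ^ 2 - Q.derivative.eval x * poleSum r y x +
        Q.coeff 2 * ∑ i, r i := by
  simp only [poleSum, Finset.mul_sum, ← Finset.sum_sub_distrib, ← Finset.sum_add_distrib]
  exact Finset.sum_congr rfl fun i _ ↦ mul_eval_div_sub_sq hQ (r i) (hx i)

end PoleSum

section ConservationLaw

variable {ι 𝕜 : Type*} [Fintype ι] [NontriviallyNormedField 𝕜]

theorem hasDerivAt_poleSum (r : ι → 𝕜) {y : ι → 𝕜} {x : 𝕜} (hx : ∀ i, x ≠ y i) :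
    HasDerivAt (poleSum r y) (-∑ i, r i / (x - y i) ^ 2) x := by
  rw [← Finset.sum_neg_distrib]
  refine HasDerivAt.fun_sum fun i _ ↦ ?_
  simpa [neg_div] using (hasDerivAt_const x (r i)).fun_div ((hasDerivAt_id' x).sub_const (y i))
    (sub_ne_zero.mpr (hx i))

theorem hasDerivAt_poleSum_moving_poles (r : ι → 𝕜) {y : ι → 𝕜 → 𝕜} {y' : ι → 𝕜} {t x : 𝕜}
    (hy : ∀ i, HasDerivAt (y i) (y' i) t) (hx : ∀ i, x ≠ y i t) :
    HasDerivAt (fun s ↦ poleSum r (y · s) x) (∑ i, r i * y' i / (x - y i t) ^ 2) t := by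
  refine HasDerivAt.fun_sum fun i _ ↦ ?_
  simpa using (hasDerivAt_const t (r i)).fun_div ((hy i).const_sub x) (sub_ne_zero.mpr (hx i))

theorem hasDerivAt_eval_mul_poleSum {Q : 𝕜[X]} (hQ : Q.natDegree ≤ 2) (r : ι → 𝕜) {y : ι → 𝕜}
    {x : 𝕜} (hx : ∀ i, x ≠ y i) :
    HasDerivAt (fun z ↦ Q.eval z * poleSum r y z)
      (Q.coeff 2 * ∑ i, r i - ∑ i, r i * Q.eval (y i) / (x - y i) ^ 2) x := by
  refine ((Q.hasDerivAt x).fun_mul (hasDerivAt_poleSum r hx)).congr_deriv ?_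
  rw [sum_mul_eval_div_sub_sq hQ r hx]
  ring

end ConservationLaw

section LaxPair

variable {ι n 𝕜 : Type*} [Fintype ι]

/-- The coefficient matrix `A(x, t)` of the Lax equation `∂Z/∂x = A Z`, with poles `yᵢ(t)` whose
residues `rᵢ S` do not depend on `t`. -/
def laxA [Field 𝕜] (r : ι → 𝕜) (y : ι → 𝕜 → 𝕜) (S : Matrix n n 𝕜) (x t : 𝕜) : Matrix n n 𝕜 :=
  poleSum r (y · t) x • S

/-- The coefficient matrix `B(x, t)` of the Lax equation `∂Z/∂t = B Z`, obtained by substituting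
`∂Z/∂x = A Z` into `∂Z/∂t = (∑ᵢ rᵢ yᵢ S) Z - Q ∂Z/∂x`. The polynomial `Q t` is `Q(·, t)`. -/
def laxB [Field 𝕜] (Q : 𝕜 → 𝕜[X]) (r : ι → 𝕜) (y : ι → 𝕜 → 𝕜) (S : Matrix n n 𝕜) (x t : 𝕜) :
    Matrix n n 𝕜 :=
  (∑ i, r i * y i t) • S - (Q t).eval x • laxA r y S x t

theorem commute_laxB_laxA [Field 𝕜] [Fintype n] (Q : 𝕜 → 𝕜[X]) (r : ι → 𝕜) (y : ι → 𝕜 → 𝕜)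
    (S : Matrix n n 𝕜) (x t : 𝕜) : Commute (laxB Q r y S x t) (laxA r y S x t) := by
  have hS (a b : 𝕜) : Commute (a • S) (b • S) := ((Commute.refl S).smul_left a).smul_right b
  exact (hS _ _).sub_left ((hS _ _).smul_left _)

variable [NontriviallyNormedField 𝕜]

theorem hasDerivAt_laxA_apply (r : ι → 𝕜) {y : ι → 𝕜 → 𝕜} {y' : ι → 𝕜} {t x : 𝕜}
    (hy : ∀ i, HasDerivAt (y i) (y' i) t) (hx : ∀ i, x ≠ y i t) (S : Matrix n n 𝕜) (j k : n) :
    HasDerivAt (fun s ↦ laxA r y S x s j k)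
      ((∑ i, r i * y' i / (x - y i t) ^ 2) * S j k) t :=
  (hasDerivAt_poleSum_moving_poles r hy hx).mul_const (S j k)

theorem hasDerivAt_laxB_apply {Q : 𝕜 → 𝕜[X]} {t : 𝕜} (hQ : (Q t).natDegree ≤ 2) {r : ι → 𝕜}
    (hr : ∑ i, r i = 0) {y : ι → 𝕜 → 𝕜} {x : 𝕜} (hx : ∀ i, x ≠ y i t) (S : Matrix n n 𝕜)
    (j k : n) :
    HasDerivAt (fun z ↦ laxB Q r y S z t j k)
      ((∑ i, r i * (Q t).eval (y i t) / (x - y i t) ^ 2) * S j k) x := by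
  have hflux :=
    ((hasDerivAt_eval_mul_poleSum hQ r hx).const_sub (∑ i, r i * y i t)).mul_const (S j k)
  simpa [laxB, laxA, hr, sub_mul, mul_assoc] using hflux

theorem halphen_second_lax_compatibility_general [Fintype n] {Q : 𝕜 → 𝕜[X]} {t : 𝕜}
    (hQ : (Q t).natDegree ≤ 2) {y : ι → 𝕜 → 𝕜}
    (hy : ∀ i, HasDerivAt (y i) ((Q t).eval (y i t)) t) {r : ι → 𝕜} (hr : ∑ i, r i = 0) {x : 𝕜}
    (hx : ∀ i, x ≠ y i t) :
    (∑ i, r i * deriv (y i) t / (x - y i t) ^ 2 =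
      (Q t).eval x * ∑ i, r i / (x - y i t) ^ 2 -
        (Q t).derivative.eval x * ∑ i, r i / (x - y i t)) ∧
    ∀ (S : Matrix n n 𝕜) (j k : n),
      deriv (fun s ↦ laxA r y S x s j k) t =
        deriv (fun z ↦ laxB Q r y S z t j k) x +
          (laxB Q r y S x t * laxA r y S x t - laxA r y S x t * laxB Q r y S x t) j k := by
  refine ⟨?_, fun S j k ↦ ?_⟩
  · simpa [(hy _).deriv, hr, poleSum] using sum_mul_eval_div_sub_sq hQ r hx
  · rw [(hasDerivAt_laxA_apply r hy hx S j k).deriv, (hasDerivAt_laxB_apply hQ hr hx S j k).deriv,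
      sub_eq_zero.mpr (commute_laxB_laxA Q r y S x t).eq, Matrix.zero_apply, add_zero]

end LaxPair

section HalphenQuadratic

variable {R : Type*} [CommRing R]

/-- The right-hand side `Q` of Halphen's second system as a polynomial in `x`, for given values
`y₁`, `y₂`, `y₃` of the three unknown functions. -/
noncomputable def halphenQuadratic (a b c y₁ y₂ y₃ : R) : R[X] :=
  X ^ 2 + C (a * (y₁ - y₂) ^ 2 + b * (y₂ - y₃) ^ 2 + c * (y₃ - y₁) ^ 2)

theorem natDegree_halphenQuadratic_le (a b c y₁ y₂ y₃ : R) :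
    (halphenQuadratic a b c y₁ y₂ y₃).natDegree ≤ 2 := by
  unfold halphenQuadratic
  compute_degree

theorem eval_halphenQuadratic (a b c y₁ y₂ y₃ x : R) :
    (halphenQuadratic a b c y₁ y₂ y₃).eval x =
      x ^ 2 + a * (y₁ - y₂) ^ 2 + b * (y₂ - y₃) ^ 2 + c * (y₃ - y₁) ^ 2 := by
  simp [halphenQuadratic, add_assoc]

theorem eval_derivative_halphenQuadratic (a b c y₁ y₂ y₃ x : R) :
    (halphenQuadratic a b c y₁ y₂ y₃).derivative.eval x = 2 * x := by
  rw [halphenQuadratic, derivative_add, derivative_C, add_zero]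
  simp [one_add_one_eq_two]

end HalphenQuadratic

/-- **Compatibility (zero-curvature) identity for the Lax pair of Halphen's second system.**
If `(x₁, x₂, x₃)` solves Halphen's second system `xⱼ' = Q(xⱼ, t)` with
`Q(x,t) = x² + a(x₁−x₂)² + b(x₂−x₃)² + c(x₃−x₁)²`, and `c₁ + c₂ + c₃ = 0`, then off the poles
`Σⱼ cⱼxⱼ'/(x−xⱼ)² = Q(x,t)·Σⱼ cⱼ/(x−xⱼ)² − 2x·Σⱼ cⱼ/(x−xⱼ)`; equivalently, for any traceless
constant `2×2` matrix `S`, with `A = Σⱼ (cⱼ/(x−xⱼ))S` and `B = Σⱼ cⱼxⱼS − Q·A`, one has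
`∂ₜA = ∂ₓB + [B, A]`. -/
theorem halphen_second_lax_compatibility
    (Ω : Set ℂ) (hΩ : IsOpen Ω) (a b c : ℂ) (x₁ x₂ x₃ : ℂ → ℂ)
    (h₁ : ∀ t ∈ Ω, DifferentiableAt ℂ x₁ t)
    (h₂ : ∀ t ∈ Ω, DifferentiableAt ℂ x₂ t)
    (h₃ : ∀ t ∈ Ω, DifferentiableAt ℂ x₃ t)
    (Q : ℂ → ℂ → ℂ)
    (hQ : ∀ x t, Q x t = x ^ 2 + a * (x₁ t - x₂ t) ^ 2 + b * (x₂ t - x₃ t) ^ 2 +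
      c * (x₃ t - x₁ t) ^ 2)
    (hsys : ∀ t ∈ Ω, deriv x₁ t = Q (x₁ t) t ∧ deriv x₂ t = Q (x₂ t) t ∧
      deriv x₃ t = Q (x₃ t) t)
    (c₁ c₂ c₃ : ℂ) (hsum : c₁ + c₂ + c₃ = 0) :
    ∀ t ∈ Ω, ∀ x : ℂ, x ≠ x₁ t → x ≠ x₂ t → x ≠ x₃ t →
      (c₁ * deriv x₁ t / (x - x₁ t) ^ 2 + c₂ * deriv x₂ t / (x - x₂ t) ^ 2 +
          c₃ * deriv x₃ t / (x - x₃ t) ^ 2 =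
        Q x t * (c₁ / (x - x₁ t) ^ 2 + c₂ / (x - x₂ t) ^ 2 + c₃ / (x - x₃ t) ^ 2) -
          2 * x * (c₁ / (x - x₁ t) + c₂ / (x - x₂ t) + c₃ / (x - x₃ t))) ∧
      (∀ S : Matrix (Fin 2) (Fin 2) ℂ, Matrix.trace S = 0 →
        let A : ℂ → ℂ → Matrix (Fin 2) (Fin 2) ℂ :=
          fun x' s => (c₁ / (x' - x₁ s) + c₂ / (x' - x₂ s) + c₃ / (x' - x₃ s)) • S
        let B : ℂ → ℂ → Matrix (Fin 2) (Fin 2) ℂ :=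
          fun x' s => (c₁ * x₁ s + c₂ * x₂ s + c₃ * x₃ s) • S - Q x' s • A x' s
        ∀ i j : Fin 2,
          deriv (fun s => A x s i j) t =
            deriv (fun x' => B x' t i j) x +
              (B x t * A x t - A x t * B x t) i j) := by
  intro t ht x hx₁ hx₂ hx₃
  let P : ℂ → ℂ[X] := fun s ↦ halphenQuadratic a b c (x₁ s) (x₂ s) (x₃ s)
  obtain rfl : Q = fun z s ↦ (P s).eval z := by
    ext z s
    rw [hQ, eval_halphenQuadratic]
  obtain ⟨e₁, e₂, e₃⟩ := hsys t ht
  have hy : ∀ i, HasDerivAt (![x₁, x₂, x₃] i) ((P t).eval (![x₁, x₂, x₃] i t)) t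
    | 0 => (h₁ t ht).hasDerivAt.congr_deriv e₁
    | 1 => (h₂ t ht).hasDerivAt.congr_deriv e₂
    | 2 => (h₃ t ht).hasDerivAt.congr_deriv e₃
  have hx : ∀ i, x ≠ ![x₁, x₂, x₃] i t
    | 0 => hx₁
    | 1 => hx₂
    | 2 => hx₃
  have hr : ∑ i, ![c₁, c₂, c₃] i = 0 := (Fin.sum_univ_three _).trans hsum
  have hlax := halphen_second_lax_compatibility_general (n := Fin 2) (Q := P)
    (natDegree_halphenQuadratic_le ..) hy hr hx
  simp only [laxA, laxB, poleSum, Fin.sum_univ_three, P, eval_derivative_halphenQuadratic] at hlax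
  exact ⟨hlax.1, fun S _ ↦ hlax.2 S⟩
end
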